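/- A contact vector field X_f on ℝ³ is π-related to some smooth vector field on ℝ² (i.e., is a point vector field) if and only if ∂²f/∂z² = 0 identically, i.e., if and only if f(x,y,z) = B(x,y) − A(x,y)·z for some smooth functions A, B on ℝ². -/

import Mathlib

noncomputable section

/-- The 1-jet space `J¹(ℝ,ℝ) = ℝ³` with coordinates `(x, y, z)`. -/
abbrev R3 : Type := ℝ × ℝ × ℝ

/-- The plane `ℝ²` with coordinates `(x, y)`. -/
abbrev R2 : Type := ℝ × ℝ

/-- Partial derivative in `x` of a function on `ℝ³`. -/
noncomputable def px (f : R3 → ℝ) (p : R3) : ℝ := fderiv ℝ f p (1, 0, 0)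

/-- Partial derivative in `y` of a function on `ℝ³`. -/
noncomputable def py (f : R3 → ℝ) (p : R3) : ℝ := fderiv ℝ f p (0, 1, 0)

/-- Partial derivative in `z` of a function on `ℝ³`. -/
noncomputable def pz (f : R3 → ℝ) (p : R3) : ℝ := fderiv ℝ f p (0, 0, 1)

/-- The contact form `ω = dy − z dx` evaluated on a vector field `X`:
`ω(X)(x,y,z) = X² − z·X¹`. -/
def omega1 (X : R3 → R3) (p : R3) : ℝ := (X p).2.1 - p.2.2 * (X p).1

/-- Lie bracket of vector fields on `ℝ³`: `[X,Y] = (DY)X − (DX)Y`. -/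
noncomputable def vbr (X Y : R3 → R3) : R3 → R3 := fun p =>
  fderiv ℝ Y p (X p) - fderiv ℝ X p (Y p)

/-- The contact vector field with characteristic function `f`:
`X_f = (−f_z, f − z f_z, f_x + z f_y)`. -/
noncomputable def Xf (f : R3 → ℝ) : R3 → R3 := fun p =>
  (-(pz f p), f p - p.2.2 * pz f p, px f p + p.2.2 * py f p)

/-- A vector field `X` on `ℝ³` is contact if it is smooth and `L_X ω = λ·ω` for some
smooth function `λ`; the Lie derivative of the 1-form `ω` is expressed through its
action on arbitrary smooth vector fields: `(L_X ω)(Y) = X(ω(Y)) − ω([X,Y])`. -/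
def IsContactVF (X : R3 → R3) : Prop :=
  ContDiff ℝ (⊤ : ℕ∞) X ∧ ∃ lam : R3 → ℝ, ContDiff ℝ (⊤ : ℕ∞) lam ∧
    ∀ Y : R3 → R3, ContDiff ℝ (⊤ : ℕ∞) Y → ∀ p : R3,
      fderiv ℝ (fun q => omega1 Y q) p (X p) - omega1 (vbr X Y) p = lam p * omega1 Y p

/-- Partial derivative in `x` of a function on the plane. -/
noncomputable def qx (A : R2 → ℝ) (q : R2) : ℝ := fderiv ℝ A q (1, 0)

/-- Partial derivative in `y` of a function on the plane. -/
noncomputable def qy (A : R2 → ℝ) (q : R2) : ℝ := fderiv ℝ A q (0, 1)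

/-- The projection `π : ℝ³ → ℝ²`, `(x,y,z) ↦ (x,y)`. -/
def proj (p : R3) : R2 := (p.1, p.2.1)

/-- The first prolongation of the plane vector field `(A, B)`:
`X^{(1)} = (A, B, B_y z² + (B_x − A_y) z − A_x)`. -/
noncomputable def prolong (A B : R2 → ℝ) : R3 → R3 := fun p =>
  (A (proj p), B (proj p),
    qy B (proj p) * p.2.2 ^ 2 + (qx B (proj p) - qy A (proj p)) * p.2.2 - qx A (proj p))

/-- A vector field `X` on `ℝ³` is `π`-related to the plane vector field `(A, B)` if
`(X¹, X²)(x,y,z) = (A(x,y), B(x,y))` for all `(x,y,z)`. -/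
def piRel (Xv : R3 → R3) (A B : R2 → ℝ) : Prop :=
  ∀ p : R3, (Xv p).1 = A (proj p) ∧ (Xv p).2.1 = B (proj p)

/-!
The first two components `-f_z` and `f - z f_z` of `X_f` are functions `A`, `B` on the plane exactly
when `f = B - A z`: the second component recovers `f` from the first, and conversely `f = B - A z`
has `f_z = -A`. Integrating `f_zz = 0` twice along the fibres of `π` produces such an expression,
and its coefficients inherit the regularity of `f` because they are read off from the values of `f`
at the heights `z = 0` and `z = 1`.
-/

section FibreDerivative

theorem forall_hasDerivAt_const_iff {𝕜 F : Type*} [RCLike 𝕜] [NormedAddCommGroup F]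
    [NormedSpace 𝕜 F] {g : 𝕜 → F} {c : F} :
    (∀ t, HasDerivAt g c t) ↔ ∀ t, g t = g 0 + t • c := by
  constructor
  · intro hg t
    have hderiv (s : 𝕜) : HasDerivAt (fun s => g s - s • c) 0 s := by
      simpa using (hg s).fun_sub ((hasDerivAt_id s).smul_const c)
    have hconst := is_const_of_deriv_eq_zero (fun s => (hderiv s).differentiableAt)
      (fun s => (hderiv s).deriv) t 0
    rw [zero_smul, sub_zero] at hconst
    exact sub_eq_iff_eq_add.mp hconst
  · intro hg t
    rw [funext hg]
    simpa using ((hasDerivAt_id t).smul_const c).const_add (g 0)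

theorem hasDerivAt_pz {g : R3 → ℝ} {x y z : ℝ} (hg : DifferentiableAt ℝ g (x, y, z)) :
    HasDerivAt (fun t => g (x, y, t)) (pz g (x, y, z)) z :=
  hg.hasFDerivAt.comp_hasDerivAt z
    ((hasDerivAt_const z x).prodMk ((hasDerivAt_const z y).prodMk (hasDerivAt_id z)))

theorem contDiff_pz {f : R3 → ℝ} {m n : WithTop ℕ∞} (hf : ContDiff ℝ n f) (hmn : m + 1 ≤ n) :
    ContDiff ℝ m (pz f) :=
  (hf.fderiv_right hmn).clm_apply contDiff_const

theorem forall_pz_eq_comp_proj_iff {g : R3 → ℝ} (hg : Differentiable ℝ g) {a : R2 → ℝ} :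
    (∀ p, pz g p = a (proj p)) ↔ ∃ b : R2 → ℝ, ∀ p, g p = b (proj p) + a (proj p) * p.2.2 := by
  constructor
  · intro h
    refine ⟨fun q => g (q.1, q.2, 0), fun ⟨x, y, z⟩ => ?_⟩
    have hline (t : ℝ) : HasDerivAt (fun t => g (x, y, t)) (a (x, y)) t :=
      h (x, y, t) ▸ hasDerivAt_pz (hg _)
    simpa [proj, mul_comm] using forall_hasDerivAt_const_iff.mp hline z
  · rintro ⟨b, h⟩ ⟨x, y, z⟩
    have hline : ∀ t, HasDerivAt (fun t => g (x, y, t)) (a (x, y)) t :=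
      forall_hasDerivAt_const_iff.mpr fun t => by simp [h, proj, mul_comm]
    exact (hasDerivAt_pz (hg _)).unique (hline z)

theorem forall_pz_pz_eq_zero_iff {f : R3 → ℝ} (hf : Differentiable ℝ f)
    (hfz : Differentiable ℝ (pz f)) :
    (∀ p, pz (pz f) p = 0) ↔
      ∃ A B : R2 → ℝ, ∀ p, f p = B (proj p) - A (proj p) * p.2.2 :=
  calc
    (∀ p, pz (pz f) p = 0) ↔ ∃ a : R2 → ℝ, ∀ p, pz f p = a (proj p) := by
        simpa using forall_pz_eq_comp_proj_iff hfz (a := 0)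
    _ ↔ ∃ a B : R2 → ℝ, ∀ p, f p = B (proj p) + a (proj p) * p.2.2 :=
        exists_congr fun _ => forall_pz_eq_comp_proj_iff hf
    _ ↔ ∃ A B : R2 → ℝ, ∀ p, f p = B (proj p) - A (proj p) * p.2.2 :=
        (Equiv.neg (R2 → ℝ)).exists_congr fun a => by simp

end FibreDerivative

section PointVectorField

variable {f : R3 → ℝ} {A B : R2 → ℝ}

theorem piRel_Xf_iff (hf : Differentiable ℝ f) :
    piRel (Xf f) A B ↔ ∀ p, f p = B (proj p) - A (proj p) * p.2.2 := by
  constructor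
  · intro h p
    obtain ⟨hA, hB⟩ : -pz f p = A (proj p) ∧ f p - p.2.2 * pz f p = B (proj p) := h p
    linear_combination hB - p.2.2 * hA
  · intro h p
    have hfz : pz f p = -A (proj p) :=
      (forall_pz_eq_comp_proj_iff hf (a := -A)).mpr ⟨B, fun p => by simp [h p, sub_eq_add_neg]⟩ p
    constructor
    · change -pz f p = A (proj p)
      rw [hfz, neg_neg]
    · change f p - p.2.2 * pz f p = B (proj p)
      rw [hfz, h p]
      ring

theorem contDiff_of_eq_sub_mul {n : WithTop ℕ∞} (hf : ContDiff ℝ n f)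
    (h : ∀ p, f p = B (proj p) - A (proj p) * p.2.2) : ContDiff ℝ n A ∧ ContDiff ℝ n B := by
  have hslice (c : ℝ) : ContDiff ℝ n fun q : R2 => f (q.1, q.2, c) := by fun_prop
  have hB : B = fun q => f (q.1, q.2, 0) := by
    funext q
    simp [h, proj]
  have hA : A = fun q => f (q.1, q.2, 0) - f (q.1, q.2, 1) := by
    funext q
    simp [h, proj]
  exact ⟨hA ▸ (hslice 0).sub (hslice 1), hB ▸ hslice 0⟩

end PointVectorField

theorem stmt5_general {n : WithTop ℕ∞} (hn : 2 ≤ n) {f : R3 → ℝ} (hf : ContDiff ℝ n f) :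
    ((∃ A B : R2 → ℝ, ContDiff ℝ n A ∧ ContDiff ℝ n B ∧ piRel (Xf f) A B) ↔
      ∀ p, pz (pz f) p = 0) ∧
    ((∃ A B : R2 → ℝ, ContDiff ℝ n A ∧ ContDiff ℝ n B ∧ piRel (Xf f) A B) ↔
      ∃ A B : R2 → ℝ, ContDiff ℝ n A ∧ ContDiff ℝ n B ∧
        ∀ p, f p = B (proj p) - A (proj p) * p.2.2) := by
  have hf₂ : ContDiff ℝ 2 f := hf.of_le hn
  have hfd : Differentiable ℝ f := hf₂.differentiable two_ne_zero
  have hfz : Differentiable ℝ (pz f) :=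
    (contDiff_pz hf₂ one_add_one_eq_two.le).differentiable one_ne_zero
  simp only [piRel_Xf_iff hfd, forall_pz_pz_eq_zero_iff hfd hfz, iff_self, and_true]
  constructor
  · rintro ⟨A, B, -, -, h⟩
    exact ⟨A, B, h⟩
  · rintro ⟨A, B, h⟩
    obtain ⟨hA, hB⟩ := contDiff_of_eq_sub_mul hf h
    exact ⟨A, B, hA, hB, h⟩

/-- A contact vector field `X_f` on `ℝ³` is `π`-related to some smooth
plane vector field (i.e. is a point vector field) iff `∂²f/∂z² = 0` identically, iff
`f(x,y,z) = B(x,y) − A(x,y)·z` for some smooth `A, B`. -/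
theorem stmt5 (f : R3 → ℝ) (hf : ContDiff ℝ (⊤ : ℕ∞) f) :
    ((∃ A B : R2 → ℝ, ContDiff ℝ (⊤ : ℕ∞) A ∧ ContDiff ℝ (⊤ : ℕ∞) B ∧
        piRel (Xf f) A B) ↔
      (∀ p : R3, pz (pz f) p = 0)) ∧
    ((∃ A B : R2 → ℝ, ContDiff ℝ (⊤ : ℕ∞) A ∧ ContDiff ℝ (⊤ : ℕ∞) B ∧
        piRel (Xf f) A B) ↔
      (∃ A B : R2 → ℝ, ContDiff ℝ (⊤ : ℕ∞) A ∧ ContDiff ℝ (⊤ : ℕ∞) B ∧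
        ∀ p : R3, f p = B (proj p) - A (proj p) * p.2.2)) :=
  stmt5_general (WithTop.coe_le_coe.mpr le_top) hf
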